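/- Let r ≥ 3, let G be a finite simple graph on n vertices with r | n and n ≥ 2r, and let G′_r be the graph obtained from G by the class/selector/dangling construction with r class vertices. Then V(G) admits a partition into r parts, each of size exactly n/r and each inducing a connected subgraph of G, if and only if there exists a set W ⊆ V(G′_r) of fair vertex cost at most n/r in G′_r such that the induced subgraph H of G′_r on V(G′_r) \ W satisfies all of the following: (i) H has no isolated vertex; (ii) every vertex v of H with original(v) has exactly one vertex a of H with belongs_to(v, a); (iii) every nonempty set U of vertices of H that is closed under same_class (i.e. all members of U are pairwise in relation same_class and no vertex outside U is in relation same_class with a member of U) induces a connected subgraph of H. -/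

import Mathlib

/-!
In `H = Hdel G r n W` the defining formulas recognise the intended vertices as soon as `W` is
*regular* (`IsRegularDeletion`): `W` contains no original vertex, every original vertex keeps two of
its dangling neighbours, and every surviving class vertex keeps three of its selectors. Then
`OriginalP` holds exactly for the vertices `orig v`, `ClassP` exactly for the surviving `cls a`, and
`orig v` belongs to `cls a` iff `sel v a ∈ W` (`original_iff`, `class_iff`, `belongs_iff`).

A bound `k` on the fair vertex cost with `k + 3 ≤ n` makes `W` regular once no original vertex is
deleted, since each vertex loses at most `k` of its `n` dangling (or selector) neighbours. Deleting
`orig v` would isolate one of the dangling vertices at `v`, not all of which can lie in `W`.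

Given a partition `P`, the set `W = {sel v (P v)}` has cost at most `n / r`. Conversely, let `P v` be
the index of the unique class vertex to which `orig v` belongs. The fibre of `P` over `a` injects
into the deleted selectors at `cls a`, so it has at most `n / r` elements; the `r` fibres have total
size `n = r * (n / r)`, so all these bounds are equalities. In both directions the sets closed under
`SameClassP` are the fibres of `P`, on which `H` and `G` induce isomorphic graphs.
-/

open scoped Classical

/-- Vertex type of the class/selector/dangling construction with `r` class vertices. -/
inductive GV (V : Type) (r n : ℕ) : Type
  | orig (v : V)
  | cls (a : Fin r)
  | sel (v : V) (a : Fin r)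
  | dang (v : V) (i : Fin n)
  deriving DecidableEq, Fintype

/-- The graph `G′_r`. -/
noncomputable def gprime {V : Type} (G : SimpleGraph V) (r n : ℕ) :
    SimpleGraph (GV V r n) :=
  SimpleGraph.fromRel (fun x y =>
    match x, y with
    | .orig u, .orig w => G.Adj u w
    | .orig u, .sel w _ => u = w
    | .sel _ a, .cls b => a = b
    | .orig u, .dang w _ => u = w
    | _, _ => False)

/-- The fair vertex cost of `W`: `max_{u} |N(u) ∩ W|`. -/
noncomputable def fairVCost {α : Type} [Fintype α] (H : SimpleGraph α) (W : Finset α) : ℕ :=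
  Finset.univ.sup fun u => (H.neighborFinset u ∩ W).card

/-- The subgraph of `G′_r` induced on `V(G′_r) \ W`. -/
noncomputable def Hdel {V : Type} [Fintype V] [DecidableEq V] (G : SimpleGraph V)
    (r n : ℕ) (W : Finset (GV V r n)) :
    SimpleGraph ((↑W : Set (GV V r n))ᶜ : Set (GV V r n)) :=
  (gprime G r n).induce _

/-- `v` has no neighbor in `H`. -/
def IsolatedP {α : Type} (H : SimpleGraph α) (v : α) : Prop := ∀ w, ¬ H.Adj v w
/-- `v` has exactly one neighbor in `H`. -/
def DanglingP {α : Type} (H : SimpleGraph α) (v : α) : Prop := ∃! w, H.Adj v w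
/-- `v` has a neighbor `w` with `DanglingP w`. -/
def OriginalP {α : Type} (H : SimpleGraph α) (v : α) : Prop :=
  ∃ w, H.Adj v w ∧ DanglingP H w
/-- `v` has exactly two neighbors in `H`. -/
def SelectorP {α : Type} (H : SimpleGraph α) (v : α) : Prop :=
  ∃ w₁ w₂, w₁ ≠ w₂ ∧ H.Adj v w₁ ∧ H.Adj v w₂ ∧ ∀ w, H.Adj v w → w = w₁ ∨ w = w₂
/-- none of `OriginalP`, `SelectorP`, `DanglingP` holds for `v`. -/
def ClassP {α : Type} (H : SimpleGraph α) (v : α) : Prop :=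
  ¬ OriginalP H v ∧ ¬ SelectorP H v ∧ ¬ DanglingP H v
/-- `OriginalP v`, `ClassP a`, and `v`, `a` have no common neighbor in `H`. -/
def BelongsToP {α : Type} (H : SimpleGraph α) (v a : α) : Prop :=
  OriginalP H v ∧ ClassP H a ∧ ¬ ∃ w, H.Adj v w ∧ H.Adj w a
/-- `v`, `w` are original vertices belonging to a common class vertex. -/
def SameClassP {α : Type} (H : SimpleGraph α) (v w : α) : Prop :=
  OriginalP H v ∧ OriginalP H w ∧ ∃ a, ClassP H a ∧ BelongsToP H v a ∧ BelongsToP H w a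

section Adjacency

variable {V : Type} (G : SimpleGraph V) {r n : ℕ}

@[simp] lemma gp_oo (u w : V) :
    (gprime G r n).Adj (.orig u) (.orig w) ↔ G.Adj u w := by
  simp only [gprime, SimpleGraph.fromRel_adj, ne_eq, GV.orig.injEq, G.adj_comm w u, or_self]
  exact ⟨fun h => h.2, fun h => ⟨h.ne, h⟩⟩

@[simp] lemma gp_os (u w : V) (a : Fin r) :
    (gprime G r n).Adj (.orig u) (.sel w a) ↔ u = w := by
  simp [gprime]

@[simp] lemma gp_od (u w : V) (i : Fin n) :
    (gprime G r n).Adj (.orig u) (.dang w i) ↔ u = w := by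
  simp [gprime]

@[simp] lemma gp_oc (u : V) (a : Fin r) :
    ¬ (gprime G r n).Adj (.orig u) (.cls a) := by
  simp [gprime]

@[simp] lemma gp_so (u w : V) (a : Fin r) :
    (gprime G r n).Adj (.sel w a) (.orig u) ↔ w = u := by
  simp [gprime, eq_comm]

@[simp] lemma gp_do (u w : V) (i : Fin n) :
    (gprime G r n).Adj (.dang w i) (.orig u) ↔ w = u := by
  simp [gprime, eq_comm]

@[simp] lemma gp_co (u : V) (a : Fin r) :
    ¬ (gprime G r n).Adj (.cls a) (.orig u) := by
  simp [gprime]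

@[simp] lemma gp_sc (u : V) (a b : Fin r) :
    (gprime G r n).Adj (.sel u a) (.cls b) ↔ a = b := by
  simp [gprime]

@[simp] lemma gp_cs (u : V) (a b : Fin r) :
    (gprime G r n).Adj (.cls b) (.sel u a) ↔ b = a := by
  simp [gprime, eq_comm]

@[simp] lemma gp_ss (u w : V) (a b : Fin r) :
    ¬ (gprime G r n).Adj (.sel u a) (.sel w b) := by
  simp [gprime]

@[simp] lemma gp_sd (u w : V) (a : Fin r) (i : Fin n) :
    ¬ (gprime G r n).Adj (.sel u a) (.dang w i) := by
  simp [gprime]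

@[simp] lemma gp_ds (u w : V) (a : Fin r) (i : Fin n) :
    ¬ (gprime G r n).Adj (.dang w i) (.sel u a) := by
  simp [gprime]

@[simp] lemma gp_dd (u w : V) (i j : Fin n) :
    ¬ (gprime G r n).Adj (.dang w i) (.dang u j) := by
  simp [gprime]

@[simp] lemma gp_cc (a b : Fin r) :
    ¬ (gprime G r n).Adj (.cls a) (.cls b) := by
  simp [gprime]

@[simp] lemma gp_cd (a : Fin r) (w : V) (i : Fin n) :
    ¬ (gprime G r n).Adj (.cls a) (.dang w i) := by
  simp [gprime]

@[simp] lemma gp_dc (a : Fin r) (w : V) (i : Fin n) :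
    ¬ (gprime G r n).Adj (.dang w i) (.cls a) := by
  simp [gprime]

end Adjacency

/-- `W` deletes no original vertex, leaves each of them two dangling neighbours, and leaves each
surviving class vertex three selectors. -/
structure IsRegularDeletion {V : Type} {r n : ℕ} (W : Finset (GV V r n)) : Prop where
  orig : ∀ v, GV.orig v ∉ W
  dang : ∀ v, ∃ i j : Fin n, i ≠ j ∧ GV.dang v i ∉ W ∧ GV.dang v j ∉ W
  sel : ∀ a, GV.cls a ∉ W → ∃ u v w : V, u ≠ v ∧ u ≠ w ∧ v ≠ w ∧
    GV.sel u a ∉ W ∧ GV.sel v a ∉ W ∧ GV.sel w a ∉ W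

section Recognition

variable {V : Type} [Fintype V] [DecidableEq V] (G : SimpleGraph V) {r n : ℕ}
  {W : Finset (GV V r n)}

lemma hdel_adj (x y : ((↑W : Set (GV V r n))ᶜ : Set (GV V r n))) :
    (Hdel G r n W).Adj x y ↔ (gprime G r n).Adj x.1 y.1 := Iff.rfl

lemma dangling_dang (hW : IsRegularDeletion W) (v : V) (i : Fin n) (h) :
    DanglingP (Hdel G r n W) ⟨.dang v i, h⟩ := by
  refine ⟨⟨.orig v, hW.orig v⟩, by simp [hdel_adj], ?_⟩
  rintro ⟨y, hy⟩ hadj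
  rw [hdel_adj] at hadj
  cases y <;> simp_all

lemma original_orig (hW : IsRegularDeletion W) (v : V) (h) :
    OriginalP (Hdel G r n W) ⟨.orig v, h⟩ := by
  obtain ⟨i, -, -, hi, -⟩ := hW.dang v
  exact ⟨⟨.dang v i, hi⟩, by simp [hdel_adj], dangling_dang G hW v i hi⟩

lemma not_dangling_of_two {α : Type} {H : SimpleGraph α} {x y z : α}
    (hne : y ≠ z) (hy : H.Adj x y) (hz : H.Adj x z) : ¬ DanglingP H x :=
  fun h => hne (h.unique hy hz)

lemma not_dangling_orig (hW : IsRegularDeletion W) (v : V) (h) :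
    ¬ DanglingP (Hdel G r n W) ⟨.orig v, h⟩ := by
  obtain ⟨i, j, hij, hi, hj⟩ := hW.dang v
  exact not_dangling_of_two (y := ⟨.dang v i, hi⟩) (z := ⟨.dang v j, hj⟩) (by simpa using hij)
    (by simp [hdel_adj]) (by simp [hdel_adj])

lemma not_dangling_cls (hW : IsRegularDeletion W) (a : Fin r) (h) :
    ¬ DanglingP (Hdel G r n W) ⟨.cls a, h⟩ := by
  obtain ⟨u, v, -, huv, -, -, hu, hv, -⟩ := hW.sel a h
  exact not_dangling_of_two (y := ⟨.sel u a, hu⟩) (z := ⟨.sel v a, hv⟩) (by simpa using huv)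
    (by simp [hdel_adj]) (by simp [hdel_adj])

lemma original_iff (hW : IsRegularDeletion W) (x : ((↑W : Set (GV V r n))ᶜ : Set (GV V r n))) :
    OriginalP (Hdel G r n W) x ↔ ∃ v, x.1 = .orig v := by
  constructor
  · rintro ⟨⟨y, hy⟩, hadj, hd⟩
    obtain ⟨x, hx⟩ := x
    rw [hdel_adj] at hadj
    cases y with
    | orig v => exact (not_dangling_orig G hW v hy hd).elim
    | cls a => exact (not_dangling_cls G hW a hy hd).elim
    | dang v i => cases x <;> simp_all
    | sel v a =>
      cases x with
      | orig u => exact ⟨u, rfl⟩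
      | cls b =>
        obtain rfl : b = a := by simpa using hadj
        -- the selector still sees both `orig v` and `cls b`
        exact (not_dangling_of_two (y := ⟨.orig v, hW.orig v⟩) (z := ⟨.cls b, hx⟩) (by simp)
          (by simp [hdel_adj]) (by simp [hdel_adj]) hd).elim
      | sel u b => simp at hadj
      | dang u i => simp at hadj
  · obtain ⟨x, hx⟩ := x
    rintro ⟨v, rfl⟩
    exact original_orig G hW v hx

lemma class_iff (hW : IsRegularDeletion W) (x : ((↑W : Set (GV V r n))ᶜ : Set (GV V r n))) :
    ClassP (Hdel G r n W) x ↔ ∃ a, x.1 = .cls a := by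
  obtain ⟨x, hx⟩ := x
  constructor
  · rintro ⟨h1, h2, h3⟩
    cases x with
    | orig v => exact (h1 (original_orig G hW v hx)).elim
    | cls a => exact ⟨a, rfl⟩
    | dang v i => exact (h3 (dangling_dang G hW v i hx)).elim
    | sel v a =>
      exfalso
      -- a selector is a `SelectorP` if its class vertex survives, and a `DanglingP` otherwise
      by_cases ha : GV.cls a ∈ W
      · refine h3 ⟨⟨.orig v, hW.orig v⟩, by simp [hdel_adj], ?_⟩
        rintro ⟨y, hy⟩ hadj
        have hyW : y ∉ W := hy
        rw [hdel_adj] at hadj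
        cases y <;> simp_all
      · refine h2 ⟨⟨.orig v, hW.orig v⟩, ⟨.cls a, ha⟩, by simp, by simp [hdel_adj],
          by simp [hdel_adj], ?_⟩
        rintro ⟨y, hy⟩ hadj
        rw [hdel_adj] at hadj
        cases y <;> simp_all
  · rintro ⟨a, rfl⟩
    refine ⟨fun h => ?_, ?_, not_dangling_cls G hW a hx⟩
    · simpa using (original_iff G hW _).1 h
    · rintro ⟨y, z, -, -, -, hyz⟩
      obtain ⟨u, v, w, huv, huw, hvw, hu, hv, hw⟩ := hW.sel a hx
      have e1 := hyz ⟨.sel u a, hu⟩ (by simp [hdel_adj])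
      have e2 := hyz ⟨.sel v a, hv⟩ (by simp [hdel_adj])
      have e3 := hyz ⟨.sel w a, hw⟩ (by simp [hdel_adj])
      have n1 : (⟨.sel u a, hu⟩ : ((↑W : Set (GV V r n))ᶜ : Set (GV V r n))) ≠ ⟨.sel v a, hv⟩ := by
        simpa using huv
      have n2 : (⟨.sel u a, hu⟩ : ((↑W : Set (GV V r n))ᶜ : Set (GV V r n))) ≠ ⟨.sel w a, hw⟩ := by
        simpa using huw
      have n3 : (⟨.sel v a, hv⟩ : ((↑W : Set (GV V r n))ᶜ : Set (GV V r n))) ≠ ⟨.sel w a, hw⟩ := by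
        simpa using hvw
      grind

lemma belongs_iff (hW : IsRegularDeletion W) (x y : ((↑W : Set (GV V r n))ᶜ : Set (GV V r n))) :
    BelongsToP (Hdel G r n W) x y ↔
      ∃ v a, x.1 = .orig v ∧ y.1 = .cls a ∧ GV.sel v a ∈ W := by
  rw [BelongsToP, original_iff G hW, class_iff G hW]
  obtain ⟨x, hx⟩ := x
  obtain ⟨y, hy⟩ := y
  constructor
  · rintro ⟨⟨v, rfl⟩, ⟨a, rfl⟩, h⟩
    refine ⟨v, a, rfl, rfl, ?_⟩
    by_contra hs
    exact h ⟨⟨.sel v a, hs⟩, by simp [hdel_adj], by simp [hdel_adj]⟩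
  · rintro ⟨v, a, rfl, rfl, h⟩
    refine ⟨⟨v, rfl⟩, ⟨a, rfl⟩, ?_⟩
    rintro ⟨⟨z, hz⟩, h1, h2⟩
    have hzW : z ∉ W := hz
    rw [hdel_adj] at h1 h2
    cases z <;> simp_all

lemma same_class_iff (hW : IsRegularDeletion W)
    (x y : ((↑W : Set (GV V r n))ᶜ : Set (GV V r n))) :
    SameClassP (Hdel G r n W) x y ↔
      ∃ v w a, x.1 = .orig v ∧ y.1 = .orig w ∧ GV.cls a ∉ W ∧ GV.sel v a ∈ W ∧
        GV.sel w a ∈ W := by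
  simp only [SameClassP, original_iff G hW, class_iff G hW, belongs_iff G hW]
  constructor
  · rintro ⟨-, -, c, -, ⟨v, a, hv, hc, hs⟩, ⟨w, b, hw, hc', hs'⟩⟩
    obtain rfl : a = b := by simpa using hc.symm.trans hc'
    exact ⟨v, w, a, hv, hw, hc ▸ c.2, hs, hs'⟩
  · rintro ⟨v, w, a, hv, hw, ha, hs, hs'⟩
    exact ⟨⟨v, hv⟩, ⟨w, hw⟩, ⟨.cls a, ha⟩, ⟨a, rfl⟩, ⟨v, a, hv, rfl, hs⟩, ⟨w, a, hw, rfl, hs'⟩⟩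

lemma connected_copy_iff (hW : ∀ v, GV.orig v ∉ W) (S : Set V) :
    ((Hdel G r n W).induce {x | ∃ v ∈ S, x.1 = .orig v}).Connected ↔ (G.induce S).Connected := by
  let f : S → {x : ((↑W : Set (GV V r n))ᶜ : Set (GV V r n)) | ∃ v ∈ S, x.1 = .orig v} :=
    fun v => ⟨⟨.orig v.1, hW v.1⟩, v.1, v.2, rfl⟩
  have hf : Function.Bijective f := by
    constructor
    · rintro ⟨v, hv⟩ ⟨w, hw⟩ h
      simpa [f] using h
    · rintro ⟨x, v, hv, hx⟩
      exact ⟨⟨v, hv⟩, Subtype.ext (Subtype.ext hx.symm)⟩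
  let e : G.induce S ≃g (Hdel G r n W).induce {x | ∃ v ∈ S, x.1 = .orig v} :=
    { toEquiv := Equiv.ofBijective f hf
      map_rel_iff' := by
        rintro ⟨v, hv⟩ ⟨w, hw⟩
        simp [f, hdel_adj] }
  exact e.connected_iff.symm

end Recognition

section Counting

variable {V : Type} [Fintype V] [DecidableEq V] (G : SimpleGraph V) {r n k : ℕ}
  {W : Finset (GV V r n)}

lemma card_le_of_cost (hc : fairVCost (gprime G r n) W ≤ k) {β : Type} [Fintype β]
    (u : GV V r n) (f : β → GV V r n) (hf : Function.Injective f)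
    (hadj : ∀ b, (gprime G r n).Adj u (f b)) :
    (Finset.univ.filter fun b => f b ∈ W).card ≤ k := by
  refine le_trans ?_ ((Finset.sup_le_iff.1 hc) u (Finset.mem_univ u))
  refine Finset.card_le_card_of_injOn f ?_ hf.injOn
  intro b hb
  have : f b ∈ W := by simpa using hb
  simp [this, hadj b]

lemma card_dang_le (hc : fairVCost (gprime G r n) W ≤ k) (v : V) :
    (Finset.univ.filter fun i : Fin n => GV.dang v i ∈ W).card ≤ k :=
  card_le_of_cost G hc (.orig v) _ (fun _ _ h => by simpa using h) (by simp)

lemma card_sel_le (hc : fairVCost (gprime G r n) W ≤ k) (a : Fin r) :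
    (Finset.univ.filter fun v : V => GV.sel v a ∈ W).card ≤ k :=
  card_le_of_cost G hc (.cls a) (fun v => .sel v a) (fun _ _ h => by simpa using h) (by simp)

/-- If each vertex loses at most `k ≤ n - 3` neighbours, enough dangling vertices and selectors
survive; only the survival of the original vertices has to be assumed. -/
lemma regular_of_cost (hn : Fintype.card V = n) (hk : k + 3 ≤ n)
    (hc : fairVCost (gprime G r n) W ≤ k) (ho : ∀ v, GV.orig v ∉ W) :
    IsRegularDeletion W := by
  refine ⟨ho, fun v => ?_, fun a _ => ?_⟩
  · have h1 := card_dang_le G hc v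
    have h2 := Finset.card_filter_add_card_filter_not (s := Finset.univ)
      (fun i : Fin n => GV.dang v i ∈ W)
    rw [Finset.card_univ, Fintype.card_fin] at h2
    obtain ⟨i, hi, j, hj, hij⟩ := Finset.one_lt_card.1
      (show 1 < (Finset.univ.filter fun i : Fin n => ¬ GV.dang v i ∈ W).card by omega)
    exact ⟨i, j, hij, (Finset.mem_filter.1 hi).2, (Finset.mem_filter.1 hj).2⟩
  · have h1 := card_sel_le G hc a
    have h2 := Finset.card_filter_add_card_filter_not (s := Finset.univ)
      (fun v : V => GV.sel v a ∈ W)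
    rw [Finset.card_univ, hn] at h2
    obtain ⟨u, v, w, hu, hv, hw, huv, huw, hvw⟩ := Finset.two_lt_card_iff.1
      (show 2 < (Finset.univ.filter fun v : V => ¬ GV.sel v a ∈ W).card by omega)
    exact ⟨u, v, w, huv, huw, hvw, (Finset.mem_filter.1 hu).2, (Finset.mem_filter.1 hv).2,
      (Finset.mem_filter.1 hw).2⟩

/-- A deleted original vertex would isolate its surviving dangling neighbours. -/
lemma orig_survives (hk : k + 3 ≤ n) (hc : fairVCost (gprime G r n) W ≤ k)
    (hi : ∀ x, ¬ IsolatedP (Hdel G r n W) x) (v : V) : GV.orig v ∉ W := by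
  intro hv
  have h1 := card_dang_le G hc v
  have h2 : ∃ i : Fin n, GV.dang v i ∉ W := by
    by_contra! hall
    rw [Finset.filter_true_of_mem (fun i _ => hall i), Finset.card_univ, Fintype.card_fin] at h1
    omega
  obtain ⟨i, h⟩ := h2
  refine hi ⟨.dang v i, h⟩ ?_
  rintro ⟨y, hy⟩ hadj
  have hyW : y ∉ W := hy
  rw [hdel_adj] at hadj
  cases y <;> simp_all

end Counting

section Directions

variable {V : Type} [Fintype V] [DecidableEq V] (G : SimpleGraph V) {r n k : ℕ}

/-- The deletion set encoding `P`: the selector of each `v` at its own class. -/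
def partDeletion (n : ℕ) (P : V → Fin r) : Finset (GV V r n) :=
  Finset.univ.image fun v => .sel v (P v)

@[simp] lemma sel_mem_partDeletion (P : V → Fin r) (v : V) (a : Fin r) :
    GV.sel v a ∈ partDeletion n P ↔ P v = a := by
  simp [partDeletion]

@[simp] lemma orig_notMem_partDeletion (P : V → Fin r) (v : V) :
    GV.orig v ∉ partDeletion n P := by
  simp [partDeletion]

@[simp] lemma cls_notMem_partDeletion (P : V → Fin r) (a : Fin r) :
    GV.cls a ∉ partDeletion n P := by
  simp [partDeletion]

@[simp] lemma dang_notMem_partDeletion (P : V → Fin r) (v : V) (i : Fin n) :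
    GV.dang v i ∉ partDeletion n P := by
  simp [partDeletion]

lemma cost_partDeletion (P : V → Fin r) (hk : 1 ≤ k)
    (hP : ∀ a, (Finset.univ.filter fun v : V => P v = a).card ≤ k) :
    fairVCost (gprime G r n) (partDeletion n P) ≤ k := by
  refine Finset.sup_le fun u _ => ?_
  cases u with
  | cls a =>
    refine le_trans (le_trans (Finset.card_le_card
      (t := (Finset.univ.filter fun v : V => P v = a).image fun v => GV.sel v a) ?_)
      Finset.card_image_le) (hP a)
    intro y hy
    cases y <;> simp_all
  | orig v =>
    refine le_trans (Finset.card_le_card (t := {GV.sel v (P v)}) ?_) (by simpa using hk)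
    intro y hy
    cases y <;> simp_all
  | sel v a =>
    refine le_trans (Finset.card_le_card (t := ∅) ?_) (by simp)
    intro y hy
    cases y <;> simp_all
  | dang v i =>
    refine le_trans (Finset.card_le_card (t := ∅) ?_) (by simp)
    intro y hy
    cases y <;> simp_all

lemma not_isolated_partDeletion (hn : Fintype.card V = n) (hk : k + 3 ≤ n) (P : V → Fin r)
    (hc : fairVCost (gprime G r n) (partDeletion n P) ≤ k) (x) :
    ¬ IsolatedP (Hdel G r n (partDeletion n P)) x := by
  have hW := regular_of_cost G hn hk hc (by simp)
  obtain ⟨x, hx⟩ := x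
  intro h
  cases x with
  | cls a =>
    obtain ⟨u, -, -, -, -, -, hu, -⟩ := hW.sel a hx
    exact h ⟨.sel u a, hu⟩ (by simp [hdel_adj])
  | orig v =>
    obtain ⟨i, -, -, hi, -⟩ := hW.dang v
    exact h ⟨.dang v i, hi⟩ (by simp [hdel_adj])
  | sel v a => exact h ⟨.orig v, hW.orig v⟩ (by simp [hdel_adj])
  | dang v i => exact h ⟨.orig v, hW.orig v⟩ (by simp [hdel_adj])

end Directions

/-- For `r ≥ 3`, `r ∣ n`, `n ≥ 2r`, the vertex set of `G` admits a
partition into `r` parts, each of size exactly `n/r` and each inducing a connected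
subgraph of `G`, iff there is a set `W ⊆ V(G′_r)` of fair vertex cost at most `n/r`
such that the induced subgraph `H` of `G′_r` on `V(G′_r) \ W` has no isolated vertex,
every original vertex of `H` belongs to exactly one class vertex, and every nonempty
set `U` of vertices of `H` closed under `same_class` induces a connected subgraph
of `H`. -/
theorem stmt16 {V : Type} [Fintype V] [DecidableEq V] (G : SimpleGraph V)
    (r n : ℕ) (hr : 3 ≤ r) (hn : Fintype.card V = n) (hdvd : r ∣ n) (h2r : 2 * r ≤ n) :
    (∃ P : V → Fin r,
        (∀ a : Fin r, (Finset.univ.filter fun v : V => P v = a).card = n / r) ∧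
        ∀ a : Fin r, (G.induce {v : V | P v = a}).Connected) ↔
    (∃ W : Finset (GV V r n),
        fairVCost (gprime G r n) W ≤ n / r ∧
        (∀ x, ¬ IsolatedP (Hdel G r n W) x) ∧
        (∀ v, OriginalP (Hdel G r n W) v → ∃! a, BelongsToP (Hdel G r n W) v a) ∧
        (∀ U : Set ((↑W : Set (GV V r n))ᶜ : Set (GV V r n)), U.Nonempty →
          (∀ v ∈ U, ∀ w ∈ U, SameClassP (Hdel G r n W) v w) →
          (∀ w ∈ U, ∀ z, z ∉ U → ¬ SameClassP (Hdel G r n W) w z) →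
          ((Hdel G r n W).induce U).Connected)) := by
  have hk2 : 2 ≤ n / r := (Nat.le_div_iff_mul_le (by omega)).2 h2r
  have hmul : r * (n / r) = n := Nat.mul_div_cancel' hdvd
  have hk3 : n / r + 3 ≤ n := by nlinarith
  constructor
  · rintro ⟨P, hP, hconn⟩
    have hc : fairVCost (gprime G r n) (partDeletion n P) ≤ n / r :=
      cost_partDeletion G P (by omega) fun a => (hP a).le
    have hW := regular_of_cost G hn hk3 hc (by simp)
    refine ⟨partDeletion n P, hc, not_isolated_partDeletion G hn hk3 P hc, ?_, ?_⟩
    · rintro ⟨x, hx⟩ hor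
      obtain ⟨v, rfl⟩ := (original_iff G hW _).1 hor
      refine ⟨⟨.cls (P v), by simp⟩, (belongs_iff G hW _ _).2 ⟨v, P v, rfl, rfl, by simp⟩, ?_⟩
      rintro ⟨y, hy⟩ hb
      obtain ⟨v', a, hv, rfl, hs⟩ := (belongs_iff G hW _ _).1 hb
      simp_all
    · rintro U ⟨x, hx⟩ hin hout
      obtain ⟨v, -, -, hv, -⟩ := (same_class_iff G hW x x).1 (hin x hx x hx)
      -- `U` is the fibre of `P` through any one of its members
      have hU : U = {y | ∃ w ∈ {w | P w = P v}, y.1 = .orig w} := by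
        ext y
        constructor
        · intro hy
          obtain ⟨v', w, a, hv', hw, -, h1, h2⟩ := (same_class_iff G hW x y).1 (hin x hx y hy)
          obtain rfl : v = v' := by simpa using hv.symm.trans hv'
          refine ⟨w, ?_, hw⟩
          simp_all
        · rintro ⟨w, hw, hy⟩
          by_contra hyU
          exact hout x hx y hyU
            ((same_class_iff G hW x y).2 ⟨v, w, P v, hv, hy, by simp, by simp, by simpa using hw⟩)
      rw [hU, connected_copy_iff G hW.orig]
      exact hconn (P v)
  · rintro ⟨W, hc, hiso, hbel, hconn⟩
    have hW := regular_of_cost G hn hk3 hc (orig_survives G hk3 hc hiso)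
    have huniq : ∀ v : V, ∃ a : Fin r, (GV.cls a ∉ W ∧ GV.sel v a ∈ W) ∧
        ∀ b : Fin r, GV.cls b ∉ W → GV.sel v b ∈ W → b = a := by
      intro v
      obtain ⟨c, hb, hu⟩ := hbel ⟨.orig v, hW.orig v⟩ (original_orig G hW v _)
      obtain ⟨v', a, hv, ha, hs⟩ := (belongs_iff G hW _ _).1 hb
      obtain rfl : v = v' := by simpa using hv
      refine ⟨a, ⟨ha ▸ c.2, hs⟩, fun b hb1 hb2 => ?_⟩
      have := hu ⟨.cls b, hb1⟩ ((belongs_iff G hW _ _).2 ⟨v, b, rfl, rfl, hb2⟩)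
      rw [← this] at ha
      simpa using ha
    choose P hP hPu using huniq
    have hle : ∀ a, (Finset.univ.filter fun v : V => P v = a).card ≤ n / r := fun a =>
      le_trans (Finset.card_le_card fun v hv => by
        have := (hP v).2
        simp_all) (card_sel_le G hc a)
    have hsum : ∑ a : Fin r, (Finset.univ.filter fun v : V => P v = a).card
        = ∑ _a : Fin r, n / r := by
      rw [← Finset.card_eq_sum_card_fiberwise (fun v _ => Finset.mem_univ (P v))]
      simp [hn, hmul]
    have heq : ∀ a, (Finset.univ.filter fun v : V => P v = a).card = n / r := fun a =>
      (Finset.sum_eq_sum_iff_of_le fun a _ => hle a).1 hsum a (Finset.mem_univ a)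
    refine ⟨P, heq, fun a => ?_⟩
    rw [← connected_copy_iff (W := W) G hW.orig]
    apply hconn
    · have hpos : 0 < (Finset.univ.filter fun v : V => P v = a).card := by
        rw [heq]; omega
      obtain ⟨v, hv⟩ := Finset.card_pos.1 hpos
      exact ⟨⟨.orig v, hW.orig v⟩, v, (Finset.mem_filter.1 hv).2, rfl⟩
    · rintro x ⟨v, rfl, hx⟩ y ⟨w, hw, hy⟩
      refine (same_class_iff G hW x y).2 ⟨v, w, P v, hx, hy, (hP v).1, (hP v).2, ?_⟩
      rw [← show P w = P v from hw]
      exact (hP w).2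
    · rintro x ⟨v, rfl, hx⟩ y hy hs
      obtain ⟨v', w, b, hv', hw, hb, h1, h2⟩ := (same_class_iff G hW x y).1 hs
      obtain rfl : v = v' := by simpa using hx.symm.trans hv'
      exact hy ⟨w, (hPu w b hb h2).symm.trans (hPu v b hb h1), hw⟩
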